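/- Let X be a finite type, ξ and p probability mass functions on X, f : X → ℝ, and k ≥ 2 an integer. Let X₁,…,X_k be i.i.d. with law ξ and Y with law p, independent of the X_i. Set μ̂ = (1/k)·∑_{i=1}^k f(X_i) and S² = (1/(k−1))·∑_{i=1}^k (f(X_i) − μ̂)². Then E[(μ̂ − f(Y))² − (1/k)·S²] = (E_ξ[f] − E_p[f])² + Var_p(f). In particular, since Var_p(f) does not depend on ξ, the variance-corrected (CVAML) loss is a calibrated surrogate: its expectation, as a function of the model distribution ξ, is minimized exactly by those ξ with E_ξ[f] = E_p[f]. -/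

import Mathlib

open Finset

/-- `IsPMF μ` says `μ` is a probability mass function on the finite type `X`. -/
def IsPMF {X : Type*} [Fintype X] (μ : X → ℝ) : Prop :=
  (∀ x, 0 ≤ μ x) ∧ ∑ x, μ x = 1

/-- Expectation of `f` under the probability mass function `μ`. -/
noncomputable def pmfExp {X : Type*} [Fintype X] (μ f : X → ℝ) : ℝ :=
  ∑ x, μ x * f x

/-- Variance of `f` under the probability mass function `μ`. -/
noncomputable def pmfVar {X : Type*} [Fintype X] (μ f : X → ℝ) : ℝ :=
  ∑ x, μ x * (f x - pmfExp μ f) ^ 2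

/-- Expected CVAML loss: for `X₁, …, X_k` i.i.d. with law `ξ` and `Y ∼ p` independent,
`E[(μ̂ − f(Y))² − (1/k)·S²]` where `μ̂ = (1/k)·∑ᵢ f(Xᵢ)` and
`S² = (1/(k−1))·∑ᵢ (f(Xᵢ) − μ̂)²`. -/
noncomputable def cvamlLoss {X : Type*} [Fintype X] (p f : X → ℝ) (k : ℕ)
    (ξ : X → ℝ) : ℝ :=
  ∑ ω : (Fin k → X) × X, ((∏ i, ξ (ω.1 i)) * p ω.2) *
    (((1 / (k : ℝ)) * (∑ i, f (ω.1 i)) - f ω.2) ^ 2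
      - (1 / (k : ℝ)) * ((1 / ((k : ℝ) - 1)) *
          ∑ i, (f (ω.1 i) - (1 / (k : ℝ)) * ∑ j, f (ω.1 j)) ^ 2))

/-!
Since `∑ᵢ aᵢ² = (∑ᵢ aᵢ)² - ∑_{i ≠ j} aᵢ aⱼ`, the corrected square `μ̂² - S² / k` is the U-statistic
`(k (k - 1))⁻¹ ∑_{i ≠ j} f(Xᵢ) f(Xⱼ)`, which by independence is an unbiased estimator of
`(E_ξ[f])²`. Hence the expected loss given `Y = y` is exactly `(E_ξ[f] - f y)²`, as if the model
mean were known, and averaging over `y` is the bias-variance decomposition under `p`.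
-/

section pmfExp

variable {X : Type*} [Fintype X] {μ : X → ℝ}

theorem pmfExp_add (f g : X → ℝ) :
    pmfExp μ (fun x => f x + g x) = pmfExp μ f + pmfExp μ g := by
  simp only [pmfExp, mul_add, sum_add_distrib]

theorem pmfExp_sub (f g : X → ℝ) :
    pmfExp μ (fun x => f x - g x) = pmfExp μ f - pmfExp μ g := by
  simp only [pmfExp, mul_sub, sum_sub_distrib]

theorem pmfExp_const_mul (c : ℝ) (f : X → ℝ) :
    pmfExp μ (fun x => c * f x) = c * pmfExp μ f := by
  simp only [pmfExp, mul_sum, mul_left_comm]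

theorem pmfExp_sum {ι : Type*} (s : Finset ι) (f : ι → X → ℝ) :
    pmfExp μ (fun x => ∑ i ∈ s, f i x) = ∑ i ∈ s, pmfExp μ (f i) := by
  simp only [pmfExp, mul_sum]
  exact sum_comm

theorem pmfExp_const (hμ : ∑ x, μ x = 1) (c : ℝ) : pmfExp μ (fun _ => c) = c := by
  rw [pmfExp, ← sum_mul, hμ, one_mul]

theorem pmfVar_eq_pmfExp (f : X → ℝ) :
    pmfVar μ f = pmfExp μ (fun x => (f x - pmfExp μ f) ^ 2) :=
  rfl

theorem pmfExp_const_sub_sq (hμ : ∑ x, μ x = 1) (f : X → ℝ) (c : ℝ) :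
    pmfExp μ (fun x => (c - f x) ^ 2) = (c - pmfExp μ f) ^ 2 + pmfVar μ f := by
  set m := pmfExp μ f with hm
  have split_at_mean (x : X) :
      (c - f x) ^ 2 = (c - m) ^ 2 - 2 * (c - m) * (f x - m) + (f x - m) ^ 2 := by ring
  have centered : pmfExp μ (fun x => f x - m) = 0 := by
    rw [pmfExp_sub, pmfExp_const hμ, ← hm, sub_self]
  simp only [split_at_mean]
  rw [pmfExp_add, pmfExp_sub, pmfExp_const hμ, pmfExp_const_mul, centered, mul_zero, sub_zero,
    pmfVar_eq_pmfExp]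

end pmfExp

section iidLaw

/-- The joint law of an i.i.d. family `(Xᵢ)_{i : ι}` with common law `ξ`. Expectations of functions
of the sample are then written with `pmfExp`. -/
def iidLaw (ι : Type*) [Fintype ι] {X : Type*} (ξ : X → ℝ) : (ι → X) → ℝ :=
  fun ω => ∏ i, ξ (ω i)

variable {ι X : Type*} [Fintype ι] [DecidableEq ι] [Fintype X] {ξ : X → ℝ}

theorem pmfExp_iidLaw_prod_univ (g : ι → X → ℝ) :
    pmfExp (iidLaw ι ξ) (fun ω => ∏ i, g i (ω i)) = ∏ i, pmfExp ξ (g i) := by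
  simp only [pmfExp, iidLaw, Fintype.prod_sum, prod_mul_distrib]

theorem pmfExp_iidLaw_prod (hξ : ∑ x, ξ x = 1) (s : Finset ι) (g : ι → X → ℝ) :
    pmfExp (iidLaw ι ξ) (fun ω => ∏ i ∈ s, g i (ω i)) = ∏ i ∈ s, pmfExp ξ (g i) := by
  have factor (i : ι) : pmfExp ξ (fun x => if i ∈ s then g i x else 1)
      = if i ∈ s then pmfExp ξ (g i) else 1 := by
    split_ifs
    · rfl
    · exact pmfExp_const hξ 1
  simpa only [factor, prod_ite_mem, univ_inter] using
    pmfExp_iidLaw_prod_univ (ξ := ξ) (fun i x => if i ∈ s then g i x else 1)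

theorem sum_iidLaw (hξ : ∑ x, ξ x = 1) : ∑ ω, iidLaw ι ξ ω = 1 := by
  simpa [pmfExp] using pmfExp_iidLaw_prod (ι := ι) hξ ∅ (fun _ _ => 1)

theorem pmfExp_iidLaw_apply (hξ : ∑ x, ξ x = 1) (f : X → ℝ) (i : ι) :
    pmfExp (iidLaw ι ξ) (fun ω => f (ω i)) = pmfExp ξ f := by
  simpa only [prod_singleton] using pmfExp_iidLaw_prod hξ {i} (fun _ => f)

theorem pmfExp_iidLaw_mul_of_ne (hξ : ∑ x, ξ x = 1) (f g : X → ℝ) {i j : ι} (hij : i ≠ j) :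
    pmfExp (iidLaw ι ξ) (fun ω => f (ω i) * g (ω j)) = pmfExp ξ f * pmfExp ξ g := by
  simpa only [prod_pair hij, if_pos, if_neg hij.symm] using
    pmfExp_iidLaw_prod hξ {i, j} (fun l => if l = i then f else g)

end iidLaw

theorem sq_sum_eq_sum_sq_add_sum_offDiag {ι R : Type*} [CommSemiring R] (s : Finset ι)
    (a : ι → R) :
    (∑ i ∈ s, a i) ^ 2 = ∑ i ∈ s, a i ^ 2 + ∑ ij ∈ s.offDiag, a ij.1 * a ij.2 := by
  classical
  rw [sq, sum_mul_sum, ← sum_product', ← diag_union_offDiag, sum_union (disjoint_diag_offDiag s),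
    sum_diag]
  simp only [sq]

theorem cast_card_offDiag {ι R : Type*} [Ring R] (s : Finset ι) :
    (#s.offDiag : R) = #s * (#s - 1) := by
  rw [offDiag_card, Nat.cast_sub (Nat.le_mul_self _), Nat.cast_mul, mul_sub_one]

theorem cast_card_sub_one_ne_zero (ι : Type*) {R : Type*} [Fintype ι] [Nontrivial ι]
    [AddGroupWithOne R] [CharZero R] : (Fintype.card ι : R) - 1 ≠ 0 :=
  sub_ne_zero.2 (Nat.cast_ne_one.2 Fintype.one_lt_card.ne')

section Sample

variable {ι X : Type*} [Fintype ι] [Fintype X] {ξ : X → ℝ}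

/-- The sample mean `μ̂` of a finite family of observations. -/
noncomputable def sampleMean (a : ι → ℝ) : ℝ :=
  1 / (Fintype.card ι : ℝ) * ∑ i, a i

/-- The sample variance `S²` of a finite family of observations, with Bessel's correction (so it is
meaningful only for at least two observations). -/
noncomputable def sampleVar (a : ι → ℝ) : ℝ :=
  1 / ((Fintype.card ι : ℝ) - 1) * ∑ i, (a i - sampleMean a) ^ 2

theorem sum_sub_sampleMean_sq [Nonempty ι] (a : ι → ℝ) :
    ∑ i, (a i - sampleMean a) ^ 2 = ∑ i, a i ^ 2 - Fintype.card ι * sampleMean a ^ 2 := by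
  have sum_eq : ∑ i, a i = Fintype.card ι * sampleMean a := by
    rw [sampleMean]
    field_simp
  simp only [sub_sq, sum_add_distrib, sum_sub_distrib, ← sum_mul, ← mul_sum, sum_eq, sum_const,
    card_univ, nsmul_eq_mul]
  ring

theorem sampleMean_sq_sub_sampleVar_eq_sum_offDiag [Nontrivial ι] (a : ι → ℝ) :
    sampleMean a ^ 2 - 1 / (Fintype.card ι : ℝ) * sampleVar a
      = 1 / (Fintype.card ι * ((Fintype.card ι : ℝ) - 1))
        * ∑ ij ∈ univ.offDiag, a ij.1 * a ij.2 := by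
  have card_sub_one_ne_zero : (Fintype.card ι : ℝ) - 1 ≠ 0 := cast_card_sub_one_ne_zero ι
  rw [sampleVar, sum_sub_sampleMean_sq,
    ← sub_eq_of_eq_add' (sq_sum_eq_sum_sq_add_sum_offDiag univ a), sampleMean]
  field_simp
  ring

variable [DecidableEq ι]

theorem pmfExp_iidLaw_sampleMean [Nonempty ι] (hξ : ∑ x, ξ x = 1) (f : X → ℝ) :
    pmfExp (iidLaw ι ξ) (fun ω => sampleMean (f ∘ ω)) = pmfExp ξ f := by
  simp only [sampleMean, Function.comp_apply, pmfExp_const_mul, pmfExp_sum,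
    pmfExp_iidLaw_apply hξ, sum_const, card_univ, nsmul_eq_mul]
  field_simp

theorem pmfExp_iidLaw_sampleMean_sq_sub_sampleVar [Nontrivial ι] (hξ : ∑ x, ξ x = 1)
    (f : X → ℝ) :
    pmfExp (iidLaw ι ξ)
      (fun ω => sampleMean (f ∘ ω) ^ 2 - 1 / (Fintype.card ι : ℝ) * sampleVar (f ∘ ω))
      = pmfExp ξ f ^ 2 := by
  have card_sub_one_ne_zero : (Fintype.card ι : ℝ) - 1 ≠ 0 := cast_card_sub_one_ne_zero ι
  have sum_pairs : ∑ ij ∈ (univ : Finset ι).offDiag,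
        pmfExp (iidLaw ι ξ) (fun ω => f (ω ij.1) * f (ω ij.2))
      = Fintype.card ι * (Fintype.card ι - 1) * pmfExp ξ f ^ 2 := by
    rw [sum_congr rfl fun ij hij => pmfExp_iidLaw_mul_of_ne hξ f f (mem_offDiag.1 hij).2.2,
      sum_const, nsmul_eq_mul, cast_card_offDiag, card_univ, sq]
  simp only [sampleMean_sq_sub_sampleVar_eq_sum_offDiag, Function.comp_apply, pmfExp_const_mul,
    pmfExp_sum, sum_pairs]
  field_simp

theorem pmfExp_iidLaw_sampleMean_sub_sq_sub_sampleVar [Nontrivial ι] (hξ : ∑ x, ξ x = 1)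
    (f : X → ℝ) (c : ℝ) :
    pmfExp (iidLaw ι ξ)
      (fun ω => (sampleMean (f ∘ ω) - c) ^ 2 - 1 / (Fintype.card ι : ℝ) * sampleVar (f ∘ ω))
      = (pmfExp ξ f - c) ^ 2 := by
  have expand (ω : ι → X) :
      (sampleMean (f ∘ ω) - c) ^ 2 - 1 / (Fintype.card ι : ℝ) * sampleVar (f ∘ ω)
        = (sampleMean (f ∘ ω) ^ 2 - 1 / (Fintype.card ι : ℝ) * sampleVar (f ∘ ω))
          - 2 * c * sampleMean (f ∘ ω) + c ^ 2 := by ring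
  simp only [expand]
  rw [pmfExp_add, pmfExp_sub, pmfExp_iidLaw_sampleMean_sq_sub_sampleVar hξ, pmfExp_const_mul,
    pmfExp_iidLaw_sampleMean hξ, pmfExp_const (sum_iidLaw hξ)]
  ring

end Sample

section cvamlLoss

variable {X : Type*} [Fintype X] {ξ p : X → ℝ} {k : ℕ}

theorem cvamlLoss_eq_pmfExp_pmfExp (ξ p f : X → ℝ) (k : ℕ) :
    cvamlLoss p f k ξ = pmfExp p fun y => pmfExp (iidLaw (Fin k) ξ) fun ω =>
      (sampleMean (f ∘ ω) - f y) ^ 2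
        - 1 / (Fintype.card (Fin k) : ℝ) * sampleVar (f ∘ ω) := by
  simp only [cvamlLoss, Fintype.sum_prod_type_right, pmfExp, iidLaw, sampleVar, sampleMean,
    Function.comp_apply, Fintype.card_fin, mul_sum (s := (univ : Finset (Fin k → X))),
    mul_left_comm (p _), mul_assoc]

theorem cvamlLoss_eq (hξ : ∑ x, ξ x = 1) (hp : ∑ x, p x = 1) (f : X → ℝ) (hk : 2 ≤ k) :
    cvamlLoss p f k ξ = (pmfExp ξ f - pmfExp p f) ^ 2 + pmfVar p f := by
  have : Nontrivial (Fin k) := Fin.nontrivial_iff_two_le.2 hk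
  simp only [cvamlLoss_eq_pmfExp_pmfExp, pmfExp_iidLaw_sampleMean_sub_sq_sub_sampleVar hξ,
    pmfExp_const_sub_sq hp]

theorem isMinOn_cvamlLoss_iff_pmfExp_eq {C : Set (X → ℝ)} (hC : ∀ ξ ∈ C, ∑ x, ξ x = 1)
    (hp : ∑ x, p x = 1) (f : X → ℝ) (hk : 2 ≤ k) (hmatch : ∃ ξ ∈ C, pmfExp ξ f = pmfExp p f)
    (hξ : ξ ∈ C) :
    IsMinOn (cvamlLoss p f k) C ξ ↔ pmfExp ξ f = pmfExp p f := by
  have loss_eq {ν : X → ℝ} (hν : ν ∈ C) := cvamlLoss_eq (hC ν hν) hp f hk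
  rw [isMinOn_iff]
  constructor
  · intro hmin
    obtain ⟨ν, hν, hνp⟩ := hmatch
    have sq_le_zero : (pmfExp ξ f - pmfExp p f) ^ 2 ≤ 0 := by
      simpa [loss_eq hξ, loss_eq hν, hνp] using hmin ν hν
    exact sub_eq_zero.1 ((sq_nonpos_iff _).1 sq_le_zero)
  · intro hmean ν hν
    simpa [loss_eq hξ, loss_eq hν, hmean] using sq_nonneg (pmfExp ν f - pmfExp p f)

end cvamlLoss

theorem cvaml_calibrated_general {X : Type*} [Fintype X] {ξ p : X → ℝ} (hξ : ∑ x, ξ x = 1)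
    (hp : ∑ x, p x = 1) (f : X → ℝ) {k : ℕ} (hk : 2 ≤ k) {C : Set (X → ℝ)}
    (hC : ∀ ν ∈ C, ∑ x, ν x = 1) (hmatch : ∃ ν ∈ C, pmfExp ν f = pmfExp p f) :
    cvamlLoss p f k ξ = (pmfExp ξ f - pmfExp p f) ^ 2 + pmfVar p f
    ∧ ∀ ξ' ∈ C, (IsMinOn (cvamlLoss p f k) C ξ' ↔ pmfExp ξ' f = pmfExp p f) :=
  ⟨cvamlLoss_eq hξ hp f hk, fun _ => isMinOn_cvamlLoss_iff_pmfExp_eq hC hp f hk hmatch⟩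

/-- The variance-corrected (CVAML) loss satisfies
`E[(μ̂ − f(Y))² − (1/k)·S²] = (E_ξ[f] − E_p[f])² + Var_p(f)`; in particular it is a
calibrated surrogate: its expectation, as a function of the model distribution,
is minimized exactly by the distributions matching the true mean `E_p[f]`. -/
theorem cvaml_calibrated {X : Type*} [Fintype X]
    (ξ p : X → ℝ) (hξ : IsPMF ξ) (hp : IsPMF p)
    (f : X → ℝ) (k : ℕ) (hk : 2 ≤ k) :
    cvamlLoss p f k ξ = (pmfExp ξ f - pmfExp p f) ^ 2 + pmfVar p f
    ∧ (∀ ξ' : X → ℝ, IsPMF ξ' →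
        ((∀ ξ'' : X → ℝ, IsPMF ξ'' → cvamlLoss p f k ξ' ≤ cvamlLoss p f k ξ'')
          ↔ pmfExp ξ' f = pmfExp p f)) := by
  simpa only [isMinOn_iff, Set.mem_ofPred_eq] using
    cvaml_calibrated_general hξ.2 hp.2 f hk (C := {ν | IsPMF ν}) (fun _ hν => hν.2) ⟨p, hp, rfl⟩
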